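/- arXiv:1405.5932 — 8 statements merged into one kernel-verified Lean document; each statement's English description precedes it below -/
import Mathlib

section
/- Let A, ε ∈ ℝ with ε > 0 and A − ε > 1, let M ≥ 1 be an integer, set r = (A−ε)/(A+ε), and define h*_l = (1/2)·(1 − r^l)/(1 − r^M) for l = 0,…,M. Then for every strictly increasing sequence h_0 = 0 < h_1 < ⋯ < h_M = 1/2 of reals, max over l ∈ {0,…,M−1} of ((A+ε)·h_{l+1} − (A−ε)·h_l) ≥ ε/(1 − r^M), and equality holds if and only if h_l = h*_l for every l. In particular, h* is such a sequence and all of its expansion rates (A+ε)·h*_{l+1} − (A−ε)·h*_l are equal to ε/(1 − r^M). -/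
/-- A sequence with `a * d (l + 1) ≤ b * d l` that vanishes at both ends vanishes throughout. -/
theorem eq_zero_of_mul_succ_le_mul {a b : ℝ} (ha : 0 < a) (hb : 0 < b) {M : ℕ} {d : ℕ → ℝ}
    (h0 : d 0 = 0) (hM : d M = 0) (hd : ∀ l < M, a * d (l + 1) ≤ b * d l) :
    ∀ l ≤ M, d l = 0 := by
  have nonpos : ∀ l ≤ M, d l ≤ 0 := by
    intro l
    induction l with
    | zero => exact fun _ => h0.le
    | succ k ih =>
      intro hk
      have := mul_nonpos_of_nonneg_of_nonpos hb.le (ih (by omega))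
      exact nonpos_of_mul_nonpos_right ((hd k hk).trans this) ha
  intro l hl
  refine Nat.decreasingInduction' (P := fun k => d k = 0) (fun k hk _ ih => ?_) hl hM
  have := hd k hk
  rw [ih, mul_zero] at this
  exact le_antisymm (nonpos k hk.le) (nonneg_of_mul_nonneg_right this hb)

/-- Lemma 3 (even number of levels N = 2M): optimality of the nonuniform quantizer `h*`.
For every admissible boundary sequence, the maximal expansion rate is at least
`ε/(1 - r^M)`, with equality exactly for `h*`; moreover `h*` is admissible and all of its
expansion rates equal `ε/(1 - r^M)`. -/
theorem stmt_4 (A ε : ℝ) (hε : 0 < ε) (hA : 1 < A - ε) (M : ℕ) (hM : 1 ≤ M)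
    (r : ℝ) (hr : r = (A - ε) / (A + ε))
    (hstar : ℕ → ℝ) (hhstar : ∀ l, hstar l = (1 / 2) * (1 - r ^ l) / (1 - r ^ M)) :
    (∀ h : ℕ → ℝ, h 0 = 0 → h M = 1 / 2 → (∀ l < M, h l < h (l + 1)) →
      (ε / (1 - r ^ M) ≤
          Finset.sup' (Finset.range M) (Finset.nonempty_range_iff.mpr (by omega))
            (fun l => (A + ε) * h (l + 1) - (A - ε) * h l) ∧
        (Finset.sup' (Finset.range M) (Finset.nonempty_range_iff.mpr (by omega))
            (fun l => (A + ε) * h (l + 1) - (A - ε) * h l) = ε / (1 - r ^ M) ↔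
          ∀ l ≤ M, h l = hstar l))) ∧
    hstar 0 = 0 ∧ hstar M = 1 / 2 ∧ (∀ l < M, hstar l < hstar (l + 1)) ∧
    (∀ l < M, (A + ε) * hstar (l + 1) - (A - ε) * hstar l = ε / (1 - r ^ M)) := by
  have ha : 0 < A + ε := by linarith
  have hb : 0 < A - ε := by linarith
  have hr0 : 0 < r := hr ▸ div_pos hb ha
  have hr1 : r < 1 := by rw [hr, div_lt_one ha]; linarith
  have hD : 0 < 1 - r ^ M := sub_pos.mpr (pow_lt_one₀ hr0.le hr1 (by omega))
  have hbr : A - ε = (A + ε) * r := by rw [hr]; field_simp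
  have star_zero : hstar 0 = 0 := by simp [hhstar]
  have star_last : hstar M = 1 / 2 := by rw [hhstar]; field_simp
  have star_rate : ∀ l, (A + ε) * hstar (l + 1) - (A - ε) * hstar l = ε / (1 - r ^ M) := by
    intro l
    rw [hhstar, hhstar]
    field_simp
    rw [pow_succ]
    linear_combination r ^ l * hbr
  have star_lt : ∀ l, hstar l < hstar (l + 1) := by
    intro l
    rw [hhstar, hhstar]
    have := pow_lt_pow_right_of_lt_one₀ hr0 hr1 (Nat.lt_succ_self l)
    gcongr
  refine ⟨fun h h0 hlast _ => ?_, star_zero, star_last, fun l _ => star_lt l,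
    fun l _ => star_rate l⟩
  set w : ℕ → ℝ := fun l => (A + ε) * h (l + 1) - (A - ε) * h l with hw
  have eq_star : (∀ l < M, w l ≤ ε / (1 - r ^ M)) → ∀ l ≤ M, h l = hstar l := by
    intro hle l hl
    refine sub_eq_zero.mp (eq_zero_of_mul_succ_le_mul (d := fun l => h l - hstar l) ha hb
      (by simp [h0, star_zero]) (by simp [hlast, star_last]) (fun k hk => ?_) l hl)
    have := hle k hk
    simp only [hw] at this
    linarith [star_rate k]
  have rate_eq : (∀ l ≤ M, h l = hstar l) → ∀ l < M, w l = ε / (1 - r ^ M) := by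
    intro heq l hl
    simp only [hw]
    rw [heq l hl.le, heq (l + 1) hl, star_rate]
  have lower : ε / (1 - r ^ M) ≤
      Finset.sup' (Finset.range M) (Finset.nonempty_range_iff.mpr (by omega)) w := by
    by_contra! hlt
    rw [Finset.sup'_lt_iff] at hlt
    have hall : ∀ l < M, w l < ε / (1 - r ^ M) := fun l hl => hlt l (Finset.mem_range.mpr hl)
    exact (hall 0 hM).ne (rate_eq (eq_star fun l hl => (hall l hl).le) 0 hM)
  refine ⟨lower, fun hsup => eq_star fun l hl => ?_, fun heq => le_antisymm ?_ lower⟩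
  · exact hsup ▸ Finset.le_sup' w (Finset.mem_range.mpr hl)
  · exact Finset.sup'_le _ _ fun l hl => (rate_eq heq l (Finset.mem_range.mp hl)).le
end

section
/- Let A, ε ∈ ℝ with ε > 0 and A − ε > 1, set r = (A−ε)/(A+ε), let M ≥ 1 be an integer, and let N = 2M. There exists a strictly increasing sequence h_0 = 0 < h_1 < ⋯ < h_M = 1/2 of reals satisfying (A+ε)·h_{l+1} − (A−ε)·h_l < 1 for every l = 0,…,M−1 if and only if ε < 1 and N > log((1−ε)²)/log r. -/
/-- A sequence started at `0` whose expansion rates are all below `1` stays below the solution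
`(1 - r ^ l) / (2 * ε)` of the recursion with expansion rates equal to `1`. -/
theorem two_mul_lt_one_sub_pow {A ε r : ℝ} (hε : 0 < ε) (hA : 0 < A - ε)
    (har : (A + ε) * r = A - ε) {M : ℕ} {h : ℕ → ℝ} (h0 : h 0 = 0)
    (hw : ∀ l < M, (A + ε) * h (l + 1) - (A - ε) * h l < 1) (hM : 1 ≤ M) :
    2 * ε * h M < 1 - r ^ M := by
  have ha : 0 < A + ε := by linarith
  have step (l : ℕ) (hl : l < M) (hle : 2 * ε * h l ≤ 1 - r ^ l) :
      2 * ε * h (l + 1) < 1 - r ^ (l + 1) := by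
    refine lt_of_mul_lt_mul_left ?_ ha.le
    calc (A + ε) * (2 * ε * h (l + 1)) = 2 * ε * ((A + ε) * h (l + 1)) := by ring
      _ < 2 * ε * (1 + (A - ε) * h l) := by
        gcongr
        linarith [hw l hl]
      _ = 2 * ε + (A - ε) * (2 * ε * h l) := by ring
      _ ≤ 2 * ε + (A - ε) * (1 - r ^ l) := by gcongr
      _ = (A + ε) * (1 - r ^ (l + 1)) := by
        rw [pow_succ]
        linear_combination r ^ l * har
  have bound (l : ℕ) (hl : l ≤ M) : 2 * ε * h l ≤ 1 - r ^ l := by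
    induction l with
    | zero => simp [h0]
    | succ l ih => exact (step l hl (ih (Nat.le_of_succ_le hl))).le
  obtain ⟨m, rfl⟩ := Nat.exists_eq_add_of_le' hM
  exact step m m.lt_succ_self (bound m m.le_succ)

/-- If `r ^ M < 1 - ε`, rescaling `1 - r ^ l` to take the value `1 / 2` at `M` gives a quantizer
with constant expansion rate below `1`. -/
theorem exists_quantizer_of_pow_lt {A ε r : ℝ} (hε : 0 < ε) (hr0 : 0 < r) (hr1 : r < 1)
    (har : (A + ε) * r = A - ε) {M : ℕ} (hM : r ^ M < 1 - ε) :
    ∃ h : ℕ → ℝ, h 0 = 0 ∧ h M = 1 / 2 ∧ (∀ l < M, h l < h (l + 1)) ∧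
      ∀ l < M, (A + ε) * h (l + 1) - (A - ε) * h l < 1 := by
  have hd : 0 < 1 - r ^ M := by linarith
  refine ⟨fun l => (1 - r ^ l) / (2 * (1 - r ^ M)), by simp, by field_simp,
    fun l _ => ?_, fun l _ => ?_⟩
  · have : r ^ (l + 1) < r ^ l := pow_lt_pow_right_of_lt_one₀ hr0 hr1 l.lt_succ_self
    dsimp only
    gcongr
  · have rate : (A + ε) * ((1 - r ^ (l + 1)) / (2 * (1 - r ^ M))) -
        (A - ε) * ((1 - r ^ l) / (2 * (1 - r ^ M))) = ε / (1 - r ^ M) := by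
      field_simp
      rw [pow_succ]
      linear_combination -r ^ l * har
    dsimp only
    rw [rate, div_lt_one hd]
    linarith

/-- The threshold on the number of levels, in exponential form. -/
theorem log_sq_div_log_lt_iff {x r : ℝ} (hx : 0 < x) (hr0 : 0 < r) (hr1 : r < 1) (M : ℕ) :
    Real.log (x ^ 2) / Real.log r < ((2 * M : ℕ) : ℝ) ↔ r ^ M < x := by
  rw [div_lt_iff_of_neg (Real.log_neg hr0 hr1), ← Real.log_lt_log_iff (pow_pos hr0 M) hx,
    Real.log_pow, Real.log_pow]
  push_cast
  rw [mul_assoc, mul_lt_mul_iff_right₀ two_pos]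

/-- Combined core of Theorem 1 and Corollary 1 (even N = 2M): a quantizer with all
expansion rates below 1 exists iff `ε < 1` and `N` exceeds the threshold
`log((1−ε)²)/log r`. -/
theorem stmt_7 (A ε : ℝ) (hε : 0 < ε) (hA : 1 < A - ε) (M : ℕ) (hM : 1 ≤ M)
    (r : ℝ) (hr : r = (A - ε) / (A + ε)) (N : ℕ) (hN : N = 2 * M) :
    (∃ h : ℕ → ℝ, h 0 = 0 ∧ h M = 1 / 2 ∧ (∀ l < M, h l < h (l + 1)) ∧
        ∀ l < M, (A + ε) * h (l + 1) - (A - ε) * h l < 1) ↔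
      (ε < 1 ∧ Real.log ((1 - ε) ^ 2) / Real.log r < (N : ℝ)) := by
  have ha : 0 < A + ε := by linarith
  have har : (A + ε) * r = A - ε := by rw [hr]; field_simp
  have hr0 : 0 < r := hr ▸ div_pos (by linarith) ha
  have hr1 : r < 1 := by rw [hr, div_lt_one ha]; linarith
  subst hN
  constructor
  · rintro ⟨h, h0, hhM, -, hw⟩
    have key := two_mul_lt_one_sub_pow hε (by linarith) har h0 hw hM
    rw [hhM] at key
    have hpow : 0 < r ^ M := pow_pos hr0 M
    have hε1 : ε < 1 := by linarith
    exact ⟨hε1, (log_sq_div_log_lt_iff (sub_pos.2 hε1) hr0 hr1 M).2 (by linarith)⟩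
  · rintro ⟨hε1, hlog⟩
    exact exists_quantizer_of_pow_lt hε hr0 hr1 har
      ((log_sq_div_log_lt_iff (sub_pos.2 hε1) hr0 hr1 M).1 hlog)
end

section
/- Let A, ε ∈ ℝ with ε > 0 and A − ε > 1, set r = (A−ε)/(A+ε), let M ≥ 1 be an integer, and let N = 2M − 1. If there exists a strictly increasing sequence h_0 = 0 < h_1 < ⋯ < h_M = 1/2 of reals satisfying 2(A+ε)·h_1 < 1 and (A+ε)·h_{l+1} − (A−ε)·h_l < 1 for every l = 1,…,M−1, then ε < 1 and N > log((1−ε)²)/log r. -/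
/-- Rates below 1 force `1 - 2 ε h_l` to decay no faster than geometrically with ratio
`(A - ε) / (A + ε)`, starting from `A / (A + ε)`. -/
lemma pow_mul_lt_one_sub_of_rates_lt_one {A ε : ℝ} (hε : 0 < ε) (hA : 0 < A - ε) {M : ℕ}
    {h : ℕ → ℝ} (hw0 : 2 * (A + ε) * h 1 < 1)
    (hwl : ∀ l, 1 ≤ l → l < M → (A + ε) * h (l + 1) - (A - ε) * h l < 1) {k : ℕ} (hk : k < M) :
    ((A - ε) / (A + ε)) ^ k * (A / (A + ε)) < 1 - 2 * ε * h (k + 1) := by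
  have hB : 0 < A + ε := by linarith
  induction k with
  | zero =>
    rw [pow_zero, one_mul, zero_add, div_lt_iff₀ hB]
    nlinarith
  | succ k ih =>
    have step := hwl (k + 1) (by omega) hk
    calc ((A - ε) / (A + ε)) ^ (k + 1) * (A / (A + ε))
        = (A - ε) / (A + ε) * (((A - ε) / (A + ε)) ^ k * (A / (A + ε))) := by ring
      _ < (A - ε) / (A + ε) * (1 - 2 * ε * h (k + 1)) :=
        mul_lt_mul_of_pos_left (ih (by omega)) (div_pos hA hB)
      _ < 1 - 2 * ε * h (k + 1 + 1) := by
        rw [div_mul_eq_mul_div, div_lt_iff₀ hB]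
        nlinarith

/-- Odd-N case of the necessity part of Theorem 1: if a quantizer with `N = 2M − 1`
levels has all expansion rates below 1, then `ε < 1` and `N` exceeds the threshold
`log((1−ε)²)/log r`. -/
theorem stmt_8 (A ε : ℝ) (hε : 0 < ε) (hA : 1 < A - ε) (M : ℕ) (hM : 1 ≤ M)
    (r : ℝ) (hr : r = (A - ε) / (A + ε)) (N : ℕ) (hN : N = 2 * M - 1)
    (h : ℕ → ℝ) (h0 : h 0 = 0) (hMval : h M = 1 / 2)
    (hmono : ∀ l < M, h l < h (l + 1))
    (hw0 : 2 * (A + ε) * h 1 < 1)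
    (hwl : ∀ l, 1 ≤ l → l < M → (A + ε) * h (l + 1) - (A - ε) * h l < 1) :
    ε < 1 ∧ Real.log ((1 - ε) ^ 2) / Real.log r < (N : ℝ) := by
  obtain ⟨k, rfl⟩ : ∃ k, M = k + 1 := ⟨M - 1, by omega⟩
  have hB : 0 < A + ε := by linarith
  have key := pow_mul_lt_one_sub_of_rates_lt_one hε (by linarith) hw0 hwl k.lt_succ_self
  rw [hMval, ← hr] at key
  have hr0 : 0 < r := hr ▸ div_pos (by linarith) hB
  have hr1 : r < 1 := by rw [hr, div_lt_one hB]; linarith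
  have hmean : A / (A + ε) = (1 + r) / 2 := by rw [hr]; field_simp; ring
  rw [hmean] at key
  have hpow : 0 < r ^ k * ((1 + r) / 2) := by positivity
  refine ⟨by linarith, ?_⟩
  rw [div_lt_iff_of_neg (Real.log_neg hr0 hr1), ← Real.log_pow]
  refine Real.log_lt_log (by positivity) ?_
  calc r ^ N = (r ^ k) ^ 2 * r := by
        rw [hN, ← pow_mul, ← pow_succ]; congr 1; omega
    _ ≤ (r ^ k) ^ 2 * ((1 + r) / 2) ^ 2 := by
        gcongr
        nlinarith [sq_nonneg (1 - r)]
    _ = (r ^ k * ((1 + r) / 2)) ^ 2 := by ring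
    _ < (1 - ε) ^ 2 := pow_lt_pow_left₀ (by linarith) hpow.le two_ne_zero
end

section
/- Define N̄(A, ε) = log((1−ε)²)/log((A−ε)/(A+ε)) for reals A, ε with 0 < ε < 1 and A − ε > 1. Then: (i) for every fixed ε ∈ (0,1), the function A ↦ N̄(A, ε) is strictly increasing on (1+ε, ∞); (ii) for every fixed A > 1, the function ε ↦ N̄(A, ε) is strictly increasing on the interval (0, min(1, A−1)). -/
/-- Monotone form of l'Hôpital's rule: if `f` and `g` vanish at `a` and `f' / g'` is strictly
increasing with `g'` positive, then `f / g` is strictly increasing. -/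
lemma strictMonoOn_div_of_strictMonoOn_deriv_div {f g f' g' : ℝ → ℝ} {a b : ℝ}
    (hfa : f a = 0) (hga : g a = 0)
    (hf : ∀ x ∈ Set.Ico a b, HasDerivAt f (f' x) x)
    (hg : ∀ x ∈ Set.Ico a b, HasDerivAt g (g' x) x)
    (hg' : ∀ x ∈ Set.Ioo a b, 0 < g' x)
    (hmono : StrictMonoOn (fun x => f' x / g' x) (Set.Ioo a b)) :
    StrictMonoOn (fun x => f x / g x) (Set.Ioo a b) := by
  have cauchy : ∀ x y, a ≤ x → x < y → y < b → ∃ c ∈ Set.Ioo x y,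
      0 < g y - g x ∧ f y - f x = f' c / g' c * (g y - g x) := by
    intro x y hax hxy hyb
    have hfc : ContinuousOn f (Set.Icc x y) := fun t ht =>
      (hf t ⟨hax.trans ht.1, ht.2.trans_lt hyb⟩).continuousAt.continuousWithinAt
    have hgc : ContinuousOn g (Set.Icc x y) := fun t ht =>
      (hg t ⟨hax.trans ht.1, ht.2.trans_lt hyb⟩).continuousAt.continuousWithinAt
    have hfd : ∀ t ∈ Set.Ioo x y, HasDerivAt f (f' t) t := fun t ht =>
      hf t ⟨hax.trans ht.1.le, ht.2.trans hyb⟩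
    have hgd : ∀ t ∈ Set.Ioo x y, HasDerivAt g (g' t) t := fun t ht =>
      hg t ⟨hax.trans ht.1.le, ht.2.trans hyb⟩
    obtain ⟨c, hc, hceq⟩ := exists_ratio_hasDerivAt_eq_ratio_slope f f' hxy hfc hfd g g' hgc hgd
    obtain ⟨d, hd, hdeq⟩ := exists_hasDerivAt_eq_slope g g' hxy hgc hgd
    have hc' := hg' c ⟨hax.trans_lt hc.1, hc.2.trans hyb⟩
    have hd' := hg' d ⟨hax.trans_lt hd.1, hd.2.trans hyb⟩
    refine ⟨c, hc, ?_, ?_⟩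
    · rw [hdeq] at hd'
      exact (div_pos_iff_of_pos_right (sub_pos.2 hxy)).1 hd'
    · field_simp
      linarith
  intro x hx y hy hxy
  obtain ⟨c, hc, hgx, hfx⟩ := cauchy a x le_rfl hx.1 hx.2
  obtain ⟨d, hd, hgy, hfy⟩ := cauchy x y hx.1.le hxy hy.2
  have hcd : f' c / g' c < f' d / g' d :=
    hmono ⟨hc.1, hc.2.trans hx.2⟩ ⟨hx.1.trans hd.1, hd.2.trans hy.2⟩ (hc.2.trans hd.1)
  rw [hfa, hga, sub_zero, sub_zero] at hfx
  rw [hga, sub_zero] at hgx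
  have hgy' : 0 < g y := by linarith
  change f x / g x < f y / g y
  rw [div_lt_div_iff₀ hgx hgy']
  have key := mul_lt_mul_of_pos_right hcd (mul_pos hgx hgy)
  have hfy' : f y = f' d / g' d * (g y - g x) + f x := by linarith
  rw [hfy', hfx]
  linarith

/-- The threshold as a quotient of positive quantities. -/
lemma log_sq_div_log_div_eq {A ε : ℝ} (h₁ : 0 < A - ε) (h₂ : 0 < A + ε) :
    Real.log ((1 - ε) ^ 2) / Real.log ((A - ε) / (A + ε)) =
      (-2 * Real.log (1 - ε)) / (Real.log (A + ε) - Real.log (A - ε)) := by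
  rw [Real.log_pow, Real.log_div h₁.ne' h₂.ne', ← neg_div_neg_eq]
  push_cast
  ring_nf

/-- Monotonicity of the threshold `N̄(A, ε) = log((1−ε)²)/log((A−ε)/(A+ε))`:
strictly increasing in the nominal pole product `A` and in the uncertainty radius `ε`. -/
theorem stmt_10
    (Nbar : ℝ → ℝ → ℝ)
    (hNbar : ∀ A ε : ℝ, Nbar A ε = Real.log ((1 - ε) ^ 2) / Real.log ((A - ε) / (A + ε))) :
    (∀ ε : ℝ, ε ∈ Set.Ioo (0 : ℝ) 1 → StrictMonoOn (fun A => Nbar A ε) (Set.Ioi (1 + ε))) ∧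
    (∀ A : ℝ, 1 < A → StrictMonoOn (fun ε => Nbar A ε) (Set.Ioo 0 (min 1 (A - 1)))) := by
  constructor
  · rintro ε ⟨h0, h1⟩ A hA B hB hAB
    simp only [Set.mem_Ioi] at hA hB
    change Nbar A ε < Nbar B ε
    rw [hNbar, hNbar, log_sq_div_log_div_eq (by linarith) (by linarith),
      log_sq_div_log_div_eq (by linarith) (by linarith)]
    have hlog : Real.log (1 - ε) < 0 := Real.log_neg (by linarith) (by linarith)
    apply div_lt_div_of_pos_left (by linarith)
    · exact sub_pos.2 (Real.log_lt_log (by linarith) (by linarith))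
    · have hA₁ : 0 < A - ε := by linarith
      have hA₂ : 0 < A + ε := by linarith
      have hB₁ : 0 < B - ε := by linarith
      have hB₂ : 0 < B + ε := by linarith
      rw [← Real.log_div hB₂.ne' hB₁.ne', ← Real.log_div hA₂.ne' hA₁.ne']
      apply Real.log_lt_log (by positivity)
      rw [div_lt_div_iff₀ hB₁ hA₁]
      nlinarith [mul_pos h0 (sub_pos.2 hAB)]
  · intro A hA
    have bounds : ∀ x ∈ Set.Ico 0 (min 1 (A - 1)),
        0 < 1 - x ∧ 0 < A - x ∧ 0 < A + x := by
      rintro x ⟨hx0, hx⟩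
      obtain ⟨hx1, hx2⟩ := lt_min_iff.1 hx
      exact ⟨by linarith, by linarith, by linarith⟩
    have hratio : ∀ x ∈ Set.Ioo 0 (min 1 (A - 1)),
        (2 / (1 - x)) / (1 / (A + x) + 1 / (A - x)) = (A ^ 2 - x ^ 2) / (A * (1 - x)) := by
      intro x hx
      obtain ⟨h1, h2, h3⟩ := bounds x ⟨hx.1.le, hx.2⟩
      have hsum : 1 / (A + x) + 1 / (A - x) = 2 * A / (A ^ 2 - x ^ 2) := by
        rw [sq_sub_sq]
        field_simp
        ring
      rw [hsum, div_div_div_eq, mul_comm (1 - x), mul_assoc, mul_div_mul_left _ _ two_ne_zero]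
    have hmono := strictMonoOn_div_of_strictMonoOn_deriv_div
      (f := fun x => -2 * Real.log (1 - x)) (g := fun x => Real.log (A + x) - Real.log (A - x))
      (f' := fun x => 2 / (1 - x)) (g' := fun x => 1 / (A + x) + 1 / (A - x))
      (a := 0) (b := min 1 (A - 1)) (by simp) (by simp)
      (fun x hx => by
        have h := ((((hasDerivAt_id x).const_sub 1).log (bounds x hx).1.ne').const_mul (-2))
        refine h.congr_deriv ?_
        simp only [id]
        ring)
      (fun x hx => by
        have h := (((hasDerivAt_id x).const_add A).log (bounds x hx).2.2.ne').sub
          (((hasDerivAt_id x).const_sub A).log (bounds x hx).2.1.ne')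
        refine h.congr_deriv ?_
        simp only [id]
        ring)
      (fun x hx => by
        obtain ⟨h1, h2, h3⟩ := bounds x ⟨hx.1.le, hx.2⟩
        positivity)
      (fun x hx y hy hxy => by
        obtain ⟨hx1, -, -⟩ := bounds x ⟨hx.1.le, hx.2⟩
        obtain ⟨hy1, -, -⟩ := bounds y ⟨hy.1.le, hy.2⟩
        have hA0 : 0 < A := by linarith
        beta_reduce
        rw [hratio x hx, hratio y hy, div_lt_div_iff₀ (by positivity) (by positivity)]
        have hfactor : 0 < A * (y - x) * ((A ^ 2 - 1) + (1 - x) * (1 - y)) :=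
          mul_pos (mul_pos hA0 (sub_pos.2 hxy))
            (add_pos (by nlinarith) (mul_pos hx1 hy1))
        linarith)
    refine hmono.congr fun x hx => ?_
    obtain ⟨-, h2, h3⟩ := bounds x ⟨hx.1.le, hx.2⟩
    exact ((hNbar A x).trans (log_sq_div_log_div_eq h2 h3)).symm
end

section
/- Let A, ε ∈ ℝ with 0 < ε < 1 and A − ε > 1. Then log((1−ε)²)/log((A−ε)/(A+ε)) < A/(1−ε). -/
/-- The tight scalar threshold `N̄ = 2^{R_nec}` is strictly smaller than `A/(1−ε)`,
the exponential of the sufficient bound of Martins et al. -/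
theorem stmt_13 (A ε : ℝ) (hε0 : 0 < ε) (hε1 : ε < 1) (hA : 1 < A - ε) :
    Real.log ((1 - ε) ^ 2) / Real.log ((A - ε) / (A + ε)) < A / (1 - ε) := by
  have hA0 : 0 < A := by linarith
  have hAε : 0 < A - ε := by linarith
  have hAε' : 0 < A + ε := by linarith
  have h1ε : 0 < 1 - ε := by linarith
  have hden : Real.log ((A - ε) / (A + ε)) ≤ -(2 * ε / A) := by
    have h := Real.le_log_one_add_of_nonneg (x := 2 * ε / (A - ε)) (by positivity)
    have hx : 1 + 2 * ε / (A - ε) = ((A - ε) / (A + ε))⁻¹ := by field_simp; ring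
    have hy : 2 * (2 * ε / (A - ε)) / (2 * ε / (A - ε) + 2) = 2 * ε / A := by
      have hs : 2 * ε / (A - ε) + 2 = 2 * A / (A - ε) := by field_simp; ring
      rw [hs]
      field_simp
    rw [hx, hy, Real.log_inv] at h
    linarith
  have hnum : -(ε / (1 - ε)) < Real.log (1 - ε) := by
    have h := Real.log_lt_sub_one_of_pos (inv_pos.mpr h1ε)
      (inv_ne_one.mpr (by linarith : 1 - ε ≠ 1))
    have hx : (1 - ε)⁻¹ - 1 = ε / (1 - ε) := by field_simp; ring
    rw [Real.log_inv, hx] at h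
    linarith
  have hneg : Real.log ((A - ε) / (A + ε)) < 0 :=
    hden.trans_lt (neg_lt_zero.mpr (by positivity))
  rw [div_lt_iff_of_neg hneg, Real.log_pow]
  calc A / (1 - ε) * Real.log ((A - ε) / (A + ε))
      ≤ A / (1 - ε) * -(2 * ε / A) := by gcongr
    _ = 2 * -(ε / (1 - ε)) := by field_simp
    _ < (2 : ℕ) * Real.log (1 - ε) := by push_cast; linarith
end

section
/- Let A, ε ∈ ℝ with 0 < ε < 1, A − ε > 1, and 1 − ε(2A + 2ε + 1) > 0. Then log((1−ε)²)/log((A−ε)/(A+ε)) < (A − ε(A+ε))/(1 − ε(2A + 2ε + 1)). -/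
/-- The tight scalar threshold `N̄ = 2^{R_nec}` is strictly smaller than the exponential
of the sufficient bound of Phat et al. -/
theorem stmt_14 (A ε : ℝ) (hε0 : 0 < ε) (hε1 : ε < 1) (hA : 1 < A - ε)
    (hden : 0 < 1 - ε * (2 * A + 2 * ε + 1)) :
    Real.log ((1 - ε) ^ 2) / Real.log ((A - ε) / (A + ε)) <
      (A - ε * (A + ε)) / (1 - ε * (2 * A + 2 * ε + 1)) := by
  have hε : 0 < 1 - ε := by linarith
  have hsum : 0 < A + ε := by linarith
  have hnum : -(2 * ε / (1 - ε)) ≤ Real.log ((1 - ε) ^ 2) := by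
    have h := Real.one_sub_inv_le_log_of_pos hε
    have e : -(2 * ε / (1 - ε)) = 2 * (1 - (1 - ε)⁻¹) := by
      field_simp
      ring
    rw [Real.log_pow, e]
    push_cast
    linarith
  have hlog : Real.log ((A - ε) / (A + ε)) ≤ -(2 * ε / (A + ε)) := by
    have h := Real.log_le_sub_one_of_pos (x := (A - ε) / (A + ε))
      (div_pos (by linarith) hsum)
    have e : -(2 * ε / (A + ε)) = (A - ε) / (A + ε) - 1 := by
      field_simp
      ring
    rwa [e]
  have hlog_neg : Real.log ((A - ε) / (A + ε)) < 0 :=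
    hlog.trans_lt (neg_neg_of_pos (by positivity))
  have hratio : (A + ε) / (1 - ε) <
      (A - ε * (A + ε)) / (1 - ε * (2 * A + 2 * ε + 1)) := by
    rw [div_lt_div_iff₀ hε hden]
    have h : 0 < ε * ((2 * A + 1) * (A - 1) + 5 * ε * A + 3 * ε ^ 2) := by
      have hA1 : 0 < A - 1 := by linarith
      have hA0 : 0 < A := by linarith
      positivity
    linarith
  refine lt_of_le_of_lt ?_ hratio
  rw [div_le_iff_of_neg hlog_neg]
  calc (A + ε) / (1 - ε) * Real.log ((A - ε) / (A + ε))
      ≤ (A + ε) / (1 - ε) * -(2 * ε / (A + ε)) := by gcongr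
    _ = -(2 * ε / (1 - ε)) := by field_simp
    _ ≤ Real.log ((1 - ε) ^ 2) := hnum
end

section
/- Let v : ℕ → ℝ be a sequence with v_j > 0 for all j, and suppose the partial products ∏_{j=0}^{k−1} v_j tend to 0 as k → ∞. Then there exists a strictly increasing function φ : ℕ → ℕ with φ(0) = 0 such that for every i, the product ∏_{j=φ(i)}^{φ(i+1)−1} v_j < 1. -/
/-- Combinatorial core of Lemma 4: if the partial products of a positive sequence tend
to 0, then time can be partitioned into consecutive blocks over each of which the product
is strictly less than 1. -/
theorem stmt_17 (v : ℕ → ℝ) (hv : ∀ j, 0 < v j)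
    (hprod : Filter.Tendsto (fun k => ∏ j ∈ Finset.range k, v j) Filter.atTop (nhds 0)) :
    ∃ φ : ℕ → ℕ, StrictMono φ ∧ φ 0 = 0 ∧
      ∀ i, ∏ j ∈ Finset.Ico (φ i) (φ (i + 1)), v j < 1 := by
  have hstep : ∀ m, ∃ n, m < n ∧ ∏ j ∈ Finset.Ico m n, v j < 1 := by
    intro m
    have hpos : 0 < ∏ j ∈ Finset.range m, v j := Finset.prod_pos fun j _ => hv j
    obtain ⟨n, hlt, hmn⟩ :=
      ((hprod.eventually_lt_const hpos).and (Filter.eventually_gt_atTop m)).exists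
    refine ⟨n, hmn, ?_⟩
    rw [← Finset.prod_range_mul_prod_Ico v hmn.le] at hlt
    exact (mul_lt_iff_lt_one_right hpos).mp hlt
  choose next hnext hnext_prod using hstep
  refine ⟨fun i => next^[i] 0, strictMono_nat_of_lt_succ fun i => ?_, rfl, fun i => ?_⟩
  · rw [Function.iterate_succ_apply']
    exact hnext _
  · simp only [Function.iterate_succ_apply']
    exact hnext_prod _
end

section
/- Let m ≥ 1 be an integer and let A, ε ∈ ℝ with 0 < ε < 1 and A − ε > 1; set r = (A−ε)/(A+ε) and N̄ = log((1−ε)²)/log r. Let x_0,…,x_{m−1} be positive reals satisfying ∏_{j=0}^{m−1} ε/(1 − r^{x_j/2}) ≤ 1 (where r^{x_j/2} denotes the real power). Then ∏_{j=0}^{m−1} x_j ≥ N̄^m. -/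
open Real in
/-- Monotonicity of `(exp t - 1) / t` on the positive reals, in cross-multiplied form. -/
theorem mul_exp_sub_one_le {u v : ℝ} (hu : 0 < u) (huv : u ≤ v) :
    v * (exp u - 1) ≤ u * (exp v - 1) := by
  have hv : 0 < v := hu.trans_le huv
  have h := convexOn_exp.secant_mono (Set.mem_univ 0) (Set.mem_univ u) (Set.mem_univ v)
    hu.ne' hv.ne' huv
  rw [exp_zero, sub_zero, sub_zero, div_le_div_iff₀ hu hv] at h
  linarith

open Real in
theorem hasDerivAt_log_one_sub_exp_neg_sub_mul_log (K : ℝ) {y : ℝ} (hy : 0 < y) :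
    HasDerivAt (fun t => log (1 - exp (-t)) - K * log t) (1 / (exp y - 1) - K / y) y := by
  have h1 : exp (-y) < 1 := exp_lt_one_iff.2 (by linarith)
  have h2 : 1 < exp y := one_lt_exp_iff.2 hy
  have h := (((hasDerivAt_neg y).exp.const_sub 1).log (sub_pos.2 h1).ne').sub
    ((hasDerivAt_log hy.ne').const_mul K)
  refine h.congr_deriv ?_
  have h3 : exp y - 1 ≠ 0 := (sub_pos.2 h2).ne'
  rw [exp_neg]
  field_simp

open Real in
/-- The tangent line inequality at `log a` for the concave function
`s ↦ log (1 - exp (-exp s))`, evaluated at `s = log y`. -/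
theorem log_one_sub_exp_neg_le {a y : ℝ} (ha : 0 < a) (hy : 0 < y) :
    log (1 - exp (-y)) ≤
      log (1 - exp (-a)) + a / (exp a - 1) * (log y - log a) := by
  have hea : 0 < exp a - 1 := sub_pos.2 (one_lt_exp_iff.2 ha)
  set K := a / (exp a - 1) with hK
  have hd := fun t (ht : 0 < t) => hasDerivAt_log_one_sub_exp_neg_sub_mul_log K ht
  suffices h : log (1 - exp (-y)) - K * log y ≤ log (1 - exp (-a)) - K * log a by linarith
  rcases le_total y a with hya | hay
  · have hmono : MonotoneOn (fun t => log (1 - exp (-t)) - K * log t) (Set.Icc y a) := by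
      refine monotoneOn_of_hasDerivWithinAt_nonneg (convex_Icc y a)
        (fun t ht => (hd t (hy.trans_le ht.1)).continuousAt.continuousWithinAt)
        (fun t ht => (hd t (hy.trans_le (interior_subset ht).1)).hasDerivWithinAt) fun t ht => ?_
      have ht' := interior_subset ht
      have ht0 : 0 < t := hy.trans_le ht'.1
      rw [sub_nonneg, hK, div_div, div_le_div_iff₀ (mul_pos hea ht0)
        (sub_pos.2 (one_lt_exp_iff.2 ht0))]
      linarith [mul_exp_sub_one_le ht0 ht'.2]
    exact hmono ⟨le_rfl, hya⟩ ⟨hya, le_rfl⟩ hya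
  · have hanti : AntitoneOn (fun t => log (1 - exp (-t)) - K * log t) (Set.Icc a y) := by
      refine antitoneOn_of_hasDerivWithinAt_nonpos (convex_Icc a y)
        (fun t ht => (hd t (ha.trans_le ht.1)).continuousAt.continuousWithinAt)
        (fun t ht => (hd t (ha.trans_le (interior_subset ht).1)).hasDerivWithinAt) fun t ht => ?_
      have ht' := interior_subset ht
      have ht0 : 0 < t := ha.trans_le ht'.1
      rw [sub_nonpos, hK, div_div, div_le_div_iff₀ (sub_pos.2 (one_lt_exp_iff.2 ht0))
        (mul_pos hea ht0)]
      linarith [mul_exp_sub_one_le ha ht'.1]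
    exact hanti ⟨le_rfl, hay⟩ ⟨hay, le_rfl⟩ hay

open Real in
theorem pow_card_le_prod_of_pow_card_le_prod_one_sub_exp_neg {ι : Type*} [Fintype ι] {a : ℝ}
    (ha : 0 < a) {y : ι → ℝ} (hy : ∀ j, 0 < y j)
    (h : (1 - exp (-a)) ^ Fintype.card ι ≤ ∏ j, (1 - exp (-y j))) :
    a ^ Fintype.card ι ≤ ∏ j, y j := by
  have hpos : ∀ {t : ℝ}, 0 < t → 0 < 1 - exp (-t) := fun ht =>
    sub_pos.2 (exp_lt_one_iff.2 (by linarith))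
  have hK : 0 < a / (exp a - 1) := div_pos ha (sub_pos.2 (one_lt_exp_iff.2 ha))
  have hlog := log_le_log (pow_pos (hpos ha) _) h
  rw [log_pow, log_prod fun j _ => (hpos (hy j)).ne'] at hlog
  have hsum := Finset.sum_le_sum fun j (_ : j ∈ Finset.univ) => log_one_sub_exp_neg_le ha (hy j)
  rw [Finset.sum_add_distrib, ← Finset.mul_sum, Finset.sum_sub_distrib, Finset.sum_const,
    Finset.sum_const, Finset.card_univ, nsmul_eq_mul, nsmul_eq_mul] at hsum
  have hnonneg := nonneg_of_mul_nonneg_right (le_of_add_le_add_left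
    ((add_zero _).trans_le (hlog.trans hsum))) hK
  rw [← log_le_log_iff (pow_pos ha _) (Finset.prod_pos fun j _ => hy j), log_pow,
    log_prod fun j _ => (hy j).ne']
  linarith

/-- Lemma 5: the geometric mean of the numbers of quantization levels over a block,
subject to the block expansion-rate constraint, is at least the threshold `N̄`. -/
theorem stmt_18 (m : ℕ) (hm : 1 ≤ m) (A ε : ℝ) (hε0 : 0 < ε) (hε1 : ε < 1)
    (hA : 1 < A - ε) (r Nbar : ℝ) (hr : r = (A - ε) / (A + ε))
    (hNbar : Nbar = Real.log ((1 - ε) ^ 2) / Real.log r)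
    (x : Fin m → ℝ) (hx : ∀ j, 0 < x j)
    (hcon : ∏ j, ε / (1 - r ^ (x j / 2)) ≤ 1) :
    Nbar ^ m ≤ ∏ j, x j := by
  have hr0 : 0 < r := hr ▸ div_pos (by linarith) (by linarith)
  have hr1 : r < 1 := by rw [hr, div_lt_one (by linarith)]; linarith
  have hlog : Real.log r < 0 := Real.log_neg hr0 hr1
  obtain ⟨c, hc⟩ : ∃ c, c = -Real.log r / 2 := ⟨_, rfl⟩
  have hc0 : 0 < c := by linarith
  have ha : c * Nbar = -Real.log (1 - ε) := by
    rw [hNbar, hc, Real.log_pow]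
    have := hlog.ne
    push_cast
    field_simp
  have ha0 : 0 < c * Nbar := by
    rw [ha]
    exact neg_pos.2 (Real.log_neg (by linarith) (by linarith))
  have hexp : 1 - Real.exp (-(c * Nbar)) = ε := by
    rw [ha, neg_neg, Real.exp_log (by linarith)]
    ring
  have hpow : ∀ j, 1 - r ^ (x j / 2) = 1 - Real.exp (-(c * x j)) := fun j => by
    rw [Real.rpow_def_of_pos hr0, hc]
    ring_nf
  have hprod : ε ^ m ≤ ∏ j, (1 - Real.exp (-(c * x j))) := by
    simp only [hpow] at hcon
    rw [Finset.prod_div_distrib, Finset.prod_const, Finset.card_univ, Fintype.card_fin,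
      div_le_one (Finset.prod_pos fun j _ => sub_pos.2 (Real.exp_lt_one_iff.2
        (neg_lt_zero.2 (mul_pos hc0 (hx j)))))] at hcon
    exact hcon
  have h := pow_card_le_prod_of_pow_card_le_prod_one_sub_exp_neg ha0
    (y := fun j => c * x j) (fun j => mul_pos hc0 (hx j))
    (by rwa [hexp, Fintype.card_fin])
  rw [Fintype.card_fin, mul_pow, Finset.prod_mul_distrib, Finset.prod_const, Finset.card_univ,
    Fintype.card_fin] at h
  exact le_of_mul_le_mul_left h (pow_pos hc0 m)
end
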